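/- arXiv:2407.20655 — 3 statements merged into one kernel-verified Lean document; each statement's English description precedes it below -/
import Mathlib

section
/- (Robust coercivity, Lemma 5.1.) For every admissible pair (τ,v), B_θ((τ,v),(τ,v)) = ∫_Ω ν|ε(v)|_F² dx + ∫_Ω ν^{-1}|Aτ|_F² dx + ∫_Ω (θ/ν)|∇·τ|² dx = |||(τ,v)|||_{eg,θ}², with equality holding exactly (coercivity constant 1, independent of ν and θ). -/
/-!
On the diagonal `χ = τ`, `w = v` the two terms `∓ 2 ∫ ⟨ε(v), τ⟩` cancel, and so do the two terms
`∓ ∫ ⟨Aτ, ε(v)⟩`. What remains is the energy: `Aτ` is trace-free, hence Frobenius-orthogonal to the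
multiple of the identity by which `τ` and `Aτ` differ, so that `⟨Aτ, τ⟩ = |Aτ|²`.
-/

open MeasureTheory

noncomputable section

/-- Frobenius inner product of two `d × d` arrays. -/
def fro {d : ℕ} (S T : Fin d → Fin d → ℝ) : ℝ := ∑ i, ∑ j, S i j * T i j

/-- The deviatoric map `A M = M − (tr M / d) • I`. -/
def devM {d : ℕ} (M : Fin d → Fin d → ℝ) : Fin d → Fin d → ℝ :=
  fun i j => M i j - ((∑ k, M k k) / (d : ℝ)) * (if i = j then 1 else 0)

/-- Partial derivative of a scalar field in the `j`-th coordinate direction. -/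
def pd {d : ℕ} (f : (Fin d → ℝ) → ℝ) (x : Fin d → ℝ) (j : Fin d) : ℝ :=
  fderiv ℝ f x (Pi.single j 1)

/-- Jacobian matrix `(∂v_i/∂x_j)` of a vector field. -/
def jac {d : ℕ} (v : (Fin d → ℝ) → Fin d → ℝ) (x : Fin d → ℝ) : Fin d → Fin d → ℝ :=
  fun i j => pd (fun y => v y i) x j

/-- Symmetric gradient `ε(v) = (∇v + (∇v)^T)/2`. -/
def epsV {d : ℕ} (v : (Fin d → ℝ) → Fin d → ℝ) (x : Fin d → ℝ) : Fin d → Fin d → ℝ :=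
  fun i j => (jac v x i j + jac v x j i) / 2

/-- Row-wise divergence `(∇·τ)_i = Σ_j ∂_j τ_{ij}` of a matrix-valued field. -/
def divT {d : ℕ} (τ : (Fin d → ℝ) → Fin d → Fin d → ℝ) (x : Fin d → ℝ) (i : Fin d) : ℝ :=
  ∑ j, pd (fun y => τ y i j) x j

/-- A pair `(τ, v)` is admissible: `τ` is `C¹` on `Ω`, `v` is `C¹` with compact
support contained in `Ω`, and the four weighted integrals are finite. -/
def Admissible {d : ℕ} (Ω : Set (Fin d → ℝ)) (ν θ : (Fin d → ℝ) → ℝ)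
    (τ : (Fin d → ℝ) → Fin d → Fin d → ℝ) (v : (Fin d → ℝ) → Fin d → ℝ) : Prop :=
  (∀ i j, ContDiffOn ℝ 1 (fun x => τ x i j) Ω) ∧
    ContDiff ℝ 1 v ∧ HasCompactSupport v ∧ tsupport v ⊆ Ω ∧
    IntegrableOn (fun x => (ν x)⁻¹ * fro (τ x) (τ x)) Ω ∧
    IntegrableOn (fun x => ν x * fro (jac v x) (jac v x)) Ω ∧
    IntegrableOn (fun x => (ν x / θ x) * ∑ i, (v x i) ^ 2) Ω ∧
    IntegrableOn (fun x => (θ x / ν x) * ∑ i, (divT τ x i) ^ 2) Ω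

/-- The augmented (non-symmetric) bilinear form `B_θ`. -/
def Bform {d : ℕ} (Ω : Set (Fin d → ℝ)) (ν θ : (Fin d → ℝ) → ℝ)
    (χ : (Fin d → ℝ) → Fin d → Fin d → ℝ) (w : (Fin d → ℝ) → Fin d → ℝ)
    (τ : (Fin d → ℝ) → Fin d → Fin d → ℝ) (v : (Fin d → ℝ) → Fin d → ℝ) : ℝ :=
  (∫ x in Ω, (ν x)⁻¹ * fro (devM (χ x)) (τ x))
    - 2 * (∫ x in Ω, fro (epsV w x) (τ x))
    + 2 * (∫ x in Ω, fro (epsV v x) (χ x))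
    - (∫ x in Ω, fro (devM (χ x)) (epsV v x))
    + (∫ x in Ω, fro (devM (τ x)) (epsV w x))
    + (∫ x in Ω, ν x * fro (epsV w x) (epsV v x))
    + (∫ x in Ω, (θ x / ν x) * ∑ i, divT χ x i * divT τ x i)

/-- The weighted energy norm `|||(τ,v)|||_{eg,θ}`. -/
def normEg {d : ℕ} (Ω : Set (Fin d → ℝ)) (ν θ : (Fin d → ℝ) → ℝ)
    (τ : (Fin d → ℝ) → Fin d → Fin d → ℝ) (v : (Fin d → ℝ) → Fin d → ℝ) : ℝ :=
  Real.sqrt ((∫ x in Ω, ν x * fro (epsV v x) (epsV v x))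
    + (∫ x in Ω, (ν x)⁻¹ * fro (devM (τ x)) (devM (τ x)))
    + (∫ x in Ω, (θ x / ν x) * ∑ i, (divT τ x i) ^ 2))

/-- The weighted full norm `|||(τ,v)|||_{full,θ}`. -/
def normFull {d : ℕ} (Ω : Set (Fin d → ℝ)) (ν θ : (Fin d → ℝ) → ℝ)
    (τ : (Fin d → ℝ) → Fin d → Fin d → ℝ) (v : (Fin d → ℝ) → Fin d → ℝ) : ℝ :=
  Real.sqrt ((∫ x in Ω, ν x * fro (jac v x) (jac v x))
    + (∫ x in Ω, (ν x / θ x) * ∑ i, (v x i) ^ 2)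
    + (∫ x in Ω, (ν x)⁻¹ * fro (τ x) (τ x))
    + (∫ x in Ω, (θ x / ν x) * ∑ i, (divT τ x i) ^ 2))

section Deviator

variable {d : ℕ}

lemma fro_self_nonneg (M : Fin d → Fin d → ℝ) : 0 ≤ fro M M :=
  Finset.sum_nonneg fun _ _ => Finset.sum_nonneg fun _ _ => mul_self_nonneg _

lemma trace_devM (M : Fin d → Fin d → ℝ) : ∑ i, devM M i i = 0 := by
  obtain rfl | hd := eq_or_ne d 0
  · exact Fin.sum_univ_zero _
  · have hd' : (d : ℝ) ≠ 0 := Nat.cast_ne_zero.mpr hd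
    simp [devM, mul_div_cancel₀ _ hd']

lemma fro_devM_right (S T : Fin d → Fin d → ℝ) :
    fro S (devM T) = fro S T - (∑ i, S i i) * ((∑ k, T k k) / d) := by
  simp [fro, devM, mul_sub, Finset.sum_sub_distrib, Finset.sum_mul]

lemma fro_devM_devM (S T : Fin d → Fin d → ℝ) : fro (devM S) (devM T) = fro (devM S) T := by
  rw [fro_devM_right, trace_devM, zero_mul, sub_zero]

end Deviator

section Energy

variable {d : ℕ} {Ω : Set (Fin d → ℝ)} {ν θ : (Fin d → ℝ) → ℝ}

/-- The weighted energy `∫ ν|ε(v)|² + ∫ ν⁻¹|Aτ|² + ∫ (θ/ν)|∇·τ|²`, the quantity under the square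
root in `normEg`. -/
def energyEg (Ω : Set (Fin d → ℝ)) (ν θ : (Fin d → ℝ) → ℝ)
    (τ : (Fin d → ℝ) → Fin d → Fin d → ℝ) (v : (Fin d → ℝ) → Fin d → ℝ) : ℝ :=
  (∫ x in Ω, ν x * fro (epsV v x) (epsV v x))
    + (∫ x in Ω, (ν x)⁻¹ * fro (devM (τ x)) (devM (τ x)))
    + (∫ x in Ω, (θ x / ν x) * ∑ i, (divT τ x i) ^ 2)

lemma energyEg_nonneg (hΩ : MeasurableSet Ω) (hν : ∀ x ∈ Ω, 0 ≤ ν x) (hθ : ∀ x ∈ Ω, 0 ≤ θ x)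
    (τ : (Fin d → ℝ) → Fin d → Fin d → ℝ) (v : (Fin d → ℝ) → Fin d → ℝ) :
    0 ≤ energyEg Ω ν θ τ v := by
  refine add_nonneg (add_nonneg ?strain ?stress) ?divergence
  case strain =>
    exact setIntegral_nonneg hΩ fun x hx => mul_nonneg (hν x hx) (fro_self_nonneg _)
  case stress =>
    exact setIntegral_nonneg hΩ fun x hx =>
      mul_nonneg (inv_nonneg.mpr (hν x hx)) (fro_self_nonneg _)
  case divergence =>
    exact setIntegral_nonneg hΩ fun x hx =>
      mul_nonneg (div_nonneg (hθ x hx) (hν x hx)) (Finset.sum_nonneg fun _ _ => sq_nonneg _)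

lemma sq_normEg (hΩ : MeasurableSet Ω) (hν : ∀ x ∈ Ω, 0 ≤ ν x) (hθ : ∀ x ∈ Ω, 0 ≤ θ x)
    (τ : (Fin d → ℝ) → Fin d → Fin d → ℝ) (v : (Fin d → ℝ) → Fin d → ℝ) :
    normEg Ω ν θ τ v ^ 2 = energyEg Ω ν θ τ v :=
  Real.sq_sqrt (energyEg_nonneg hΩ hν hθ τ v)

lemma Bform_self (Ω : Set (Fin d → ℝ)) (ν θ : (Fin d → ℝ) → ℝ)
    (τ : (Fin d → ℝ) → Fin d → Fin d → ℝ) (v : (Fin d → ℝ) → Fin d → ℝ) :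
    Bform Ω ν θ τ v τ v = energyEg Ω ν θ τ v := by
  simp only [Bform, energyEg, fro_devM_devM, pow_two]
  ring

theorem stmt_7_general (hΩ : IsOpen Ω) (hν : ∀ x ∈ Ω, 0 < ν x) (hθ : ∀ x ∈ Ω, 0 ≤ θ x)
    {τ : (Fin d → ℝ) → Fin d → Fin d → ℝ} {v : (Fin d → ℝ) → Fin d → ℝ}
    (_hτ : ∀ i j, DifferentiableOn ℝ (fun x => τ x i j) Ω) (_hv : DifferentiableOn ℝ v Ω)
    (_hτ_int : IntegrableOn (fun x => (ν x)⁻¹ * fro (τ x) (τ x)) Ω)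
    (_hv_int : IntegrableOn (fun x => ν x * fro (jac v x) (jac v x)) Ω)
    (_hdiv_int : IntegrableOn (fun x => (θ x / ν x) * ∑ i, (divT τ x i) ^ 2) Ω) :
    Bform Ω ν θ τ v τ v = energyEg Ω ν θ τ v ∧
      Bform Ω ν θ τ v τ v = normEg Ω ν θ τ v ^ 2 := by
  have norm_sq := sq_normEg hΩ.measurableSet (fun x hx => (hν x hx).le) hθ τ v
  exact ⟨Bform_self Ω ν θ τ v, (Bform_self Ω ν θ τ v).trans norm_sq.symm⟩

end Energy

/-- Robust coercivity, Lemma 5.1: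
`B_θ((τ,v),(τ,v)) = ∫ ν|ε(v)|² + ∫ ν⁻¹|Aτ|² + ∫ (θ/ν)|∇·τ|² = |||(τ,v)|||²_{eg,θ}`. -/
theorem stmt_7 (d : ℕ) (Ω : Set (Fin d → ℝ)) (hΩ : IsOpen Ω)
    (ν θ : (Fin d → ℝ) → ℝ) (hνmeas : Measurable ν) (hθmeas : Measurable θ)
    (lam Lam θ₀ θ₁ : ℝ) (hlam : 0 < lam) (hνbd : ∀ x ∈ Ω, lam ≤ ν x ∧ ν x ≤ Lam)
    (hθ₀ : 0 < θ₀) (hθbd : ∀ x ∈ Ω, θ₀ ≤ θ x ∧ θ x ≤ θ₁)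
    (τ : (Fin d → ℝ) → Fin d → Fin d → ℝ) (v : (Fin d → ℝ) → Fin d → ℝ)
    (hadm : Admissible Ω ν θ τ v) :
    Bform Ω ν θ τ v τ v =
        (∫ x in Ω, ν x * fro (epsV v x) (epsV v x))
          + (∫ x in Ω, (ν x)⁻¹ * fro (devM (τ x)) (devM (τ x)))
          + (∫ x in Ω, (θ x / ν x) * ∑ i, (divT τ x i) ^ 2) ∧
      Bform Ω ν θ τ v τ v = (normEg Ω ν θ τ v) ^ 2 := by
  obtain ⟨hτ, hv, -, -, hτ_int, hv_int, -, hdiv_int⟩ := hadm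
  exact stmt_7_general hΩ (fun x hx => hlam.trans_le (hνbd x hx).1)
    (fun x hx => hθ₀.le.trans (hθbd x hx).1) (fun i j => (hτ i j).differentiableOn one_ne_zero)
    (hv.differentiable one_ne_zero).differentiableOn hτ_int hv_int hdiv_int
end
end

section
/- (Robust Céa-type estimate, Theorem 6.1.) Let S be an ℝ-linear subspace of the space of admissible pairs. Let (σ,u) be an admissible pair, let (σ_h,u_h) ∈ S, and assume the Galerkin orthogonality B_θ((σ−σ_h, u−u_h),(ρ,z)) = 0 for every (ρ,z) ∈ S. Then for every (τ_h,v_h) ∈ S: |||(σ−σ_h, u−u_h)|||_{eg,θ} ≤ 2 |||(σ−τ_h, u−v_h)|||_{full,θ}; in particular |||(σ−σ_h, u−u_h)|||_{eg,θ} ≤ 2 inf over (τ_h,v_h) ∈ S of |||(σ−τ_h, u−v_h)|||_{full,θ}, with constant 2 independent of ν and θ. -/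
open MeasureTheory

noncomputable section

/-! Let `e` be the error and `η` the approximation error. Since `B_θ(e, e) = |||e|||²_eg`, Galerkin
orthogonality gives `|||e|||²_eg = B_θ(e, η)`. The energy norm does not control the trace part of
the stress `χ` of `e`, which occurs in `B_θ(e, η)` through `⟨ε(v), χ⟩`. It is removed by subtracting
`2 ∫ ∇·(χᵀ v) = 0`, where `η = (τ, v)` and `v` has compact support. Young's inequality, applied
pointwise to what remains, produces squares of combinations of `τ`, `∇v`, `∇·τ` and `v`, whose mixed
terms add up to `-4 ∇·(τᵀ v)` and hence integrate to zero as well. What is left is `2 B_θ(e, η) ≤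
|||e|||²_eg + 4 |||η|||²_full`, which gives the constant `2`. All integrals converge by the weighted
Cauchy-Schwarz inequality, whatever the size of the weights. -/

/-! ### Orthogonal projections for a positive semidefinite form -/

section BilinForm

variable {E : Type*} [AddCommGroup E] [Module ℝ E] {B : LinearMap.BilinForm ℝ E}

/-- `P` is a projection which is orthogonal (that is, self-adjoint) for the bilinear form `B`.
Mathlib's `LinearMap.IsSymmetricProjection` is the same notion for inner product spaces; a bilinear
form lets us use plain function spaces, whose norm is the supremum norm. -/
structure IsOrthogonalProjection (B : LinearMap.BilinForm ℝ E) (P : E →ₗ[ℝ] E) : Prop where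
  apply_left : ∀ x y, B (P x) y = B x (P y)
  idem : ∀ x, P (P x) = P x

lemma IsOrthogonalProjection.apply_apply {P : E →ₗ[ℝ] E} (hP : IsOrthogonalProjection B P)
    (x y : E) : B (P x) (P y) = B (P x) y := by
  rw [← hP.apply_left, hP.idem]

lemma IsOrthogonalProjection.apply_self_le {P : E →ₗ[ℝ] E} (hP : IsOrthogonalProjection B P)
    (hB : B.IsPosSemidef) (x : E) : B (P x) (P x) ≤ B x x := by
  have hcomp : 0 ≤ B (x - P x) (x - P x) := hB.nonneg _
  simp only [map_sub, LinearMap.sub_apply, ← hP.apply_left, hP.idem] at hcomp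
  rw [hP.apply_apply]
  linarith

lemma two_mul_apply_le (hB : B.IsPosSemidef) (x y : E) : 2 * B x y ≤ B x x + B y y := by
  have hsub : 0 ≤ B (x - y) (x - y) := hB.nonneg _
  simp only [map_sub, LinearMap.sub_apply, hB.eq y x] at hsub
  linarith

lemma abs_mul_apply_le_half_add (hB : B.IsPosSemidef) {r s t : ℝ} (hs : 0 ≤ s) (ht : 0 ≤ t)
    (hr : r ^ 2 ≤ s * t) (x y : E) : |r * B x y| ≤ (s * B x x + t * B y y) / 2 := by
  have hx : 0 ≤ s * B x x := mul_nonneg hs (hB.nonneg x)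
  have hy : 0 ≤ t * B y y := mul_nonneg ht (hB.nonneg y)
  have hcs : B x y ^ 2 ≤ B x x * B y y :=
    B.apply_sq_le_of_symm hB.nonneg (B.isPosSemidef_iff.1 hB).isSymm x y
  refine abs_le_of_sq_le_sq ?_ (by linarith)
  calc (r * B x y) ^ 2 = r ^ 2 * B x y ^ 2 := mul_pow _ _ _
    _ ≤ s * t * (B x x * B y y) := by gcongr
    _ = (s * B x x) * (t * B y y) := by ring
    _ ≤ ((s * B x x + t * B y y) / 2) ^ 2 := by
      linarith [four_mul_le_sq_add (s * B x x) (t * B y y)]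

/-- Young's inequality for `c` and `q - (2 / r) p`; expanding the square of the latter leaves the
mixed term `-4 B p q`. -/
lemma two_mul_mul_apply_sub_le (hB : B.IsPosSemidef) {r : ℝ} (hr : 0 < r) (c p q : E) :
    2 * (r * B c q) - 4 * B p c ≤ r * B c c + 4 * (r⁻¹ * B p p + r * B q q - B p q) := by
  have hyoung := mul_le_mul_of_nonneg_left (two_mul_apply_le hB c (q - (2 * r⁻¹) • p)) hr.le
  have hq : 0 ≤ r ^ 2 * B q q := mul_nonneg (sq_nonneg r) (hB.nonneg q)
  simp only [map_sub, map_smul, LinearMap.sub_apply, LinearMap.smul_apply, smul_eq_mul,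
    hB.eq p q, hB.eq p c] at hyoung ⊢
  field_simp at hyoung ⊢
  linarith

variable {A P : E →ₗ[ℝ] E}

lemma IsOrthogonalProjection.apply_comp_eq (hA : IsOrthogonalProjection B A)
    (hP : IsOrthogonalProjection B P) (hAP : ∀ x, P (x - A x) = x - A x) (x y : E) :
    B x (A (P y)) = B x (A y) + B x (P y) - B x y := by
  have hPA := congrArg (B · y) (hAP x)
  simp only [map_sub, LinearMap.sub_apply, hA.apply_left, hP.apply_left] at hPA
  linarith

/-- On each of the mutually orthogonal subspaces `range A ⊓ range P`, `ker P` and `ker A`, the mixed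
terms of the two squares add up to `-4 B V T`. -/
lemma apply_residuals_le (hB : B.IsPosSemidef) (hA : IsOrthogonalProjection B A)
    (hP : IsOrthogonalProjection B P) (hAP : ∀ x, P (x - A x) = x - A x) (T V : E) :
    B (A (T + P V - (2 : ℝ) • V)) (A (T + P V - (2 : ℝ) • V)) +
        B (P (V + A T - (2 : ℝ) • T)) (P (V + A T - (2 : ℝ) • T)) ≤
      4 * (B V V + B T T - B V T) := by
  have hT : 0 ≤ B (A (P T)) (A (P T)) := hB.nonneg _
  have hV : 0 ≤ B (A (P V)) (A (P V)) := hB.nonneg _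
  have hkerT : 0 ≤ B (T - P T) (T - P T) := hB.nonneg _
  have hkerV : 0 ≤ B (V - A V) (V - A V) := hB.nonneg _
  have hPA (x y : E) : B x (P (A y)) = B x (A y) + B x (P y) - B x y := by
    have := congrArg (B x) (hAP y)
    simp only [map_sub] at this
    linarith
  have hsymmA : B V (A T) = B T (A V) := by rw [← hA.apply_left, hB.eq]
  have hsymmP : B V (P T) = B T (P V) := by rw [← hP.apply_left, hB.eq]
  simp only [map_add, map_sub, map_smul, LinearMap.add_apply, LinearMap.sub_apply,
    LinearMap.smul_apply, smul_eq_mul, hA.apply_left, hP.apply_left, hA.idem, hP.idem, hPA,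
    hA.apply_comp_eq hP hAP, hsymmA, hsymmP, hB.eq V T] at *
  linarith

/-- The boundedness estimate behind the constant `2`, with the weights scaled away. Since `A` and
`P` together see every component, subtracting `4 B V X` turns the left-hand side into
`2 B (A X) (A (T + P V - 2 V)) + 2 B (P W) (P (V + A T - 2 T))`. -/
lemma two_mul_projections_sub_le (hB : B.IsPosSemidef) (hA : IsOrthogonalProjection B A)
    (hP : IsOrthogonalProjection B P) (hAP : ∀ x, P (x - A x) = x - A x) (X W T V : E) :
    2 * (B (A X) T - 2 * B (P W) T + 2 * B (P V) X - B (A X) (P V) + B (A T) (P W) +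
        B (P W) (P V)) - 4 * B V X ≤
      B (P W) (P W) + B (A X) (A X) + 4 * (B V V + B T T - B V T) := by
  have hX := two_mul_apply_le hB (A X) (A (T + P V - (2 : ℝ) • V))
  have hW := two_mul_apply_le hB (P W) (P (V + A T - (2 : ℝ) • T))
  have hres := apply_residuals_le hB hA hP hAP T V
  have hXcross : B (A X) (A (T + P V - (2 : ℝ) • V)) =
      B (A X) T + B (A X) (P V) - 2 * B (A X) V := by
    rw [hA.apply_apply, map_sub, map_add, map_smul, smul_eq_mul]
  have hWcross : B (P W) (P (V + A T - (2 : ℝ) • T)) =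
      B (P W) V + B (P W) (A T) - 2 * B (P W) T := by
    rw [hP.apply_apply, map_sub, map_add, map_smul, smul_eq_mul]
  have hXV : B (A X) V = B X V - B X (P V) + B (A X) (P V) := by
    rw [hA.apply_left X (P V), hA.apply_comp_eq hP hAP, hA.apply_left]
    ring
  rw [hP.apply_apply W V, hB.eq (P V) X, hB.eq (A T) (P W), hB.eq V X]
  linarith

lemma two_mul_weighted_projections_sub_le (hB : B.IsPosSemidef) (hA : IsOrthogonalProjection B A)
    (hP : IsOrthogonalProjection B P) (hAP : ∀ x, P (x - A x) = x - A x) {n : ℝ} (hn : 0 < n)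
    (X W T V : E) :
    2 * (n⁻¹ * B (A X) T - 2 * B (P W) T + 2 * B (P V) X - B (A X) (P V) + B (A T) (P W) +
        n * B (P W) (P V)) - 4 * B V X ≤
      n * B (P W) (P W) + n⁻¹ * B (A X) (A X) + 4 * (n * B V V + n⁻¹ * B T T - B V T) := by
  have hscaled := two_mul_projections_sub_le hB hA hP hAP X (n • W) T (n • V)
  simp only [map_smul, LinearMap.smul_apply, smul_eq_mul] at hscaled
  field_simp
  linarith

end BilinForm

/-! ### The Frobenius form -/

section Frobenius

variable {d : ℕ}

/-- The Frobenius inner product as a bilinear form. -/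
def froForm (d : ℕ) : LinearMap.BilinForm ℝ (Fin d → Fin d → ℝ) :=
  LinearMap.mk₂ ℝ fro
    (fun _ _ _ => by simp only [fro, Pi.add_apply, add_mul, Finset.sum_add_distrib])
    (fun _ _ _ => by simp only [fro, Pi.smul_apply, smul_eq_mul, mul_assoc, Finset.mul_sum])
    (fun _ _ _ => by simp only [fro, Pi.add_apply, mul_add, Finset.sum_add_distrib])
    (fun _ _ _ => by simp only [fro, Pi.smul_apply, smul_eq_mul, mul_left_comm, Finset.mul_sum])

lemma froForm_apply (S T : Fin d → Fin d → ℝ) : froForm d S T = fro S T := rfl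

lemma froForm_isPosSemidef : (froForm d).IsPosSemidef where
  eq S T := by simp only [froForm_apply, fro, mul_comm]
  nonneg S := show 0 ≤ fro S S from
    Finset.sum_nonneg fun _ _ => Finset.sum_nonneg fun _ _ => mul_self_nonneg _

/-- The dot product of `ℝ^d` as a bilinear form. -/
abbrev dotForm (d : ℕ) : LinearMap.BilinForm ℝ (Fin d → ℝ) := dotProductBilin ℝ ℝ

lemma dotForm_isPosSemidef : (dotForm d).IsPosSemidef where
  eq := dotProduct_comm
  nonneg v := show 0 ≤ v ⬝ᵥ v from Finset.sum_nonneg fun _ _ => mul_self_nonneg _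

/-- The symmetric part `(M + Mᵀ) / 2` of a matrix, as a linear map; `ε(v)` is the symmetric part
of `∇v`. -/
def symPart (d : ℕ) : (Fin d → Fin d → ℝ) →ₗ[ℝ] Fin d → Fin d → ℝ where
  toFun M i j := (M i j + M j i) / 2
  map_add' M N := by ext i j; simp only [Pi.add_apply]; ring
  map_smul' c M := by ext i j; simp only [Pi.smul_apply, smul_eq_mul, RingHom.id_apply]; ring

/-- The deviatoric map `devM` as a linear map. -/
def deviator (d : ℕ) : (Fin d → Fin d → ℝ) →ₗ[ℝ] Fin d → Fin d → ℝ where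
  toFun := devM
  map_add' M N := by
    ext i j
    simp only [devM, Pi.add_apply, Finset.sum_add_distrib]
    ring
  map_smul' c M := by
    ext i j
    simp only [devM, Pi.smul_apply, smul_eq_mul, RingHom.id_apply, ← Finset.mul_sum]
    ring

lemma isOrthogonalProjection_symPart : IsOrthogonalProjection (froForm d) (symPart d) where
  apply_left S T := by
    have hswap : ∑ i, ∑ j, S j i * T i j = ∑ i, ∑ j, S i j * T j i := Finset.sum_comm
    simp only [froForm_apply, fro, symPart, LinearMap.coe_mk, AddHom.coe_mk, div_mul_eq_mul_div,
      mul_div_assoc', add_mul, mul_add, ← Finset.sum_div, Finset.sum_add_distrib, hswap]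
  idem M := by
    ext i j
    simp only [symPart, LinearMap.coe_mk, AddHom.coe_mk]
    ring

lemma froForm_deviator_left (S T : Fin d → Fin d → ℝ) :
    froForm d (deviator d S) T = fro S T - (∑ k, S k k) * (∑ k, T k k) / d := by
  simp only [froForm_apply, fro, deviator, devM, LinearMap.coe_mk, AddHom.coe_mk, sub_mul,
    Finset.sum_sub_distrib, mul_ite, ite_mul, mul_one, mul_zero, zero_mul, Finset.sum_ite_eq,
    Finset.mem_univ, if_true, ← Finset.mul_sum]
  ring

lemma trace_deviator (M : Fin d → Fin d → ℝ) : ∑ k, deviator d M k k = 0 := by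
  rcases eq_or_ne d 0 with rfl | hd
  · simp
  · simp only [deviator, devM, LinearMap.coe_mk, AddHom.coe_mk, if_true, mul_one,
      Finset.sum_sub_distrib, Finset.sum_const, Finset.card_univ, Fintype.card_fin, nsmul_eq_mul]
    field_simp
    ring

lemma isOrthogonalProjection_deviator : IsOrthogonalProjection (froForm d) (deviator d) where
  apply_left S T := by
    rw [froForm_isPosSemidef.eq S (deviator d T), froForm_deviator_left, froForm_deviator_left,
      ← froForm_apply T, ← froForm_isPosSemidef.eq S T, froForm_apply, mul_comm (∑ k, T k k)]
  idem M := by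
    have htrace := trace_deviator M
    ext i j
    change deviator d M i j - (∑ k, deviator d M k k) / d * _ = deviator d M i j
    rw [htrace, zero_div, zero_mul, sub_zero]

lemma symPart_sub_deviator (M : Fin d → Fin d → ℝ) :
    symPart d (M - deviator d M) = M - deviator d M := by
  ext i j
  simp only [symPart, deviator, devM, LinearMap.coe_mk, AddHom.coe_mk, Pi.sub_apply,
    eq_comm (a := j)]
  ring

end Frobenius

/-! ### Weighted square-integrable functions -/

section WeightedL2

variable {α E : Type*} [MeasurableSpace α] [NormedAddCommGroup E] [NormedSpace ℝ E]
  {B : LinearMap.BilinForm ℝ E} {μ : Measure α} {w w' c : α → ℝ} {f g : α → E}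

/-- `w` is a weight: almost everywhere measurable and almost everywhere positive. Neither `w` nor
`w⁻¹` has to be bounded or integrable. -/
structure IsWeight (w : α → ℝ) (μ : Measure α) : Prop where
  aemeasurable : AEMeasurable w μ
  pos : ∀ᵐ x ∂μ, 0 < w x

lemma IsWeight.inv (hw : IsWeight w μ) : IsWeight w⁻¹ μ where
  aemeasurable := hw.aemeasurable.inv
  pos := hw.pos.mono fun _ => inv_pos_of_pos

lemma IsWeight.div (hw : IsWeight w μ) (hw' : IsWeight w' μ) : IsWeight (w / w') μ where
  aemeasurable := hw.aemeasurable.div hw'.aemeasurable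
  pos := by filter_upwards [hw.pos, hw'.pos] with x hx hx' using div_pos hx hx'

/-- `f` belongs to the weighted space `L²(w dμ)`, where the square of a value is taken with respect
to the bilinear form `B`. -/
structure MemWeightedL2 (B : LinearMap.BilinForm ℝ E) (w : α → ℝ) (f : α → E) (μ : Measure α) :
    Prop where
  aestronglyMeasurable : AEStronglyMeasurable f μ
  integrable : Integrable (fun x => w x * B (f x) (f x)) μ

lemma MemWeightedL2.congr (hf : MemWeightedL2 B w f μ) (hfg : f =ᵐ[μ] g) :
    MemWeightedL2 B w g μ where
  aestronglyMeasurable := hf.aestronglyMeasurable.congr hfg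
  integrable := hf.integrable.congr (hfg.mono fun x hx => by simp only [hx])

variable [FiniteDimensional ℝ E]

lemma aestronglyMeasurable_bilin (B : LinearMap.BilinForm ℝ E) (hf : AEStronglyMeasurable f μ)
    (hg : AEStronglyMeasurable g μ) : AEStronglyMeasurable (fun x => B (f x) (g x)) μ :=
  B.toContinuousBilinearMap.aestronglyMeasurable_comp₂ hf hg

namespace MemWeightedL2

lemma integrable_mul_apply (hB : B.IsPosSemidef) (hf : MemWeightedL2 B w f μ)
    (hg : MemWeightedL2 B w' g μ) (hw : IsWeight w μ) (hw' : IsWeight w' μ)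
    (hc : AEMeasurable c μ) (hcw : ∀ᵐ x ∂μ, c x ^ 2 ≤ w x * w' x) :
    Integrable (fun x => c x * B (f x) (g x)) μ := by
  refine ((hf.integrable.add hg.integrable).div_const 2).mono' (hc.aestronglyMeasurable.mul
    (aestronglyMeasurable_bilin B hf.aestronglyMeasurable hg.aestronglyMeasurable)) ?_
  filter_upwards [hw.pos, hw'.pos, hcw] with x hx hx' hcx
  exact abs_mul_apply_le_half_add hB hx.le hx'.le hcx (f x) (g x)

lemma integrable_weight_mul_apply (hB : B.IsPosSemidef) (hf : MemWeightedL2 B w f μ)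
    (hg : MemWeightedL2 B w g μ) (hw : IsWeight w μ) :
    Integrable (fun x => w x * B (f x) (g x)) μ :=
  hf.integrable_mul_apply hB hg hw hw hw.aemeasurable (.of_forall fun x => (sq (w x)).le)

lemma integrable_apply_of_inv (hB : B.IsPosSemidef) (hf : MemWeightedL2 B w f μ)
    (hg : MemWeightedL2 B w⁻¹ g μ) (hw : IsWeight w μ) :
    Integrable (fun x => B (f x) (g x)) μ := by
  have hone : ∀ᵐ x ∂μ, (1 : ℝ) ^ 2 ≤ w x * w⁻¹ x := hw.pos.mono fun x hx => by
    rw [Pi.inv_apply, mul_inv_cancel₀ hx.ne', one_pow]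
  simpa only [one_mul] using
    hf.integrable_mul_apply hB hg hw hw.inv (c := fun _ => 1) aemeasurable_const hone

lemma sub (hB : B.IsPosSemidef) (hf : MemWeightedL2 B w f μ) (hg : MemWeightedL2 B w g μ)
    (hw : IsWeight w μ) : MemWeightedL2 B w (f - g) μ where
  aestronglyMeasurable := hf.aestronglyMeasurable.sub hg.aestronglyMeasurable
  integrable := by
    have hcross := hf.integrable_weight_mul_apply hB hg hw
    refine ((hf.integrable.sub (hcross.const_mul 2)).add hg.integrable).congr
      (.of_forall fun x => ?_)
    simp only [Pi.add_apply, Pi.sub_apply, map_sub, LinearMap.sub_apply, hB.eq (g x) (f x)]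
    ring

lemma projection {P : E →ₗ[ℝ] E} (hB : B.IsPosSemidef) (hP : IsOrthogonalProjection B P)
    (hf : MemWeightedL2 B w f μ) (hw : IsWeight w μ) :
    MemWeightedL2 B w (fun x => P (f x)) μ where
  aestronglyMeasurable :=
    P.continuous_of_finiteDimensional.comp_aestronglyMeasurable hf.aestronglyMeasurable
  integrable := by
    have hPf := P.continuous_of_finiteDimensional.comp_aestronglyMeasurable
      hf.aestronglyMeasurable
    refine hf.integrable.mono' (hw.aemeasurable.aestronglyMeasurable.mul
      (aestronglyMeasurable_bilin B hPf hPf)) ?_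
    filter_upwards [hw.pos] with x hx
    rw [Real.norm_of_nonneg (mul_nonneg hx.le (hB.nonneg _))]
    exact mul_le_mul_of_nonneg_left (hP.apply_self_le hB (f x)) hx.le

end MemWeightedL2

end WeightedL2

/-! ### Integration by parts -/

section IntegrationByParts

lemma integrable_mul_of_tsupport_subset {X : Type*} [TopologicalSpace X] [MeasurableSpace X]
    [OpensMeasurableSpace X] {μ : Measure X} [IsFiniteMeasureOnCompacts μ] {Ω : Set X}
    (hΩ : IsOpen Ω) {f g : X → ℝ} (hf : Continuous f) (hfc : HasCompactSupport f)
    (hfΩ : tsupport f ⊆ Ω) (hg : ContinuousOn g Ω) : Integrable (fun x => f x * g x) μ := by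
  refine (continuous_of_tsupport fun x hx => ?_).integrable_of_hasCompactSupport hfc.mul_right
  have hxΩ : x ∈ Ω := hfΩ (tsupport_mul_subset_left hx)
  exact hf.continuousAt.mul (hg.continuousAt (hΩ.mem_nhds hxΩ))

variable {E : Type*} [NormedAddCommGroup E] [NormedSpace ℝ E] [MeasurableSpace E] [BorelSpace E]
  {μ : Measure E} {Ω : Set E} {f g : E → ℝ}

lemma integrable_fderiv_mul_and_mul_fderiv [IsFiniteMeasureOnCompacts μ] (hΩ : IsOpen Ω)
    (hf : ContDiff ℝ 1 f) (hfc : HasCompactSupport f) (hfΩ : tsupport f ⊆ Ω)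
    (hg : ContDiffOn ℝ 1 g Ω) (e : E) :
    Integrable (fun x => fderiv ℝ f x e * g x) μ ∧ Integrable (fun x => f x * fderiv ℝ g x e) μ :=
  ⟨integrable_mul_of_tsupport_subset hΩ
      ((hf.continuous_fderiv one_ne_zero).clm_apply continuous_const) (hfc.fderiv_apply ℝ e)
      ((tsupport_fderiv_apply_subset ℝ e).trans hfΩ) hg.continuousOn,
    integrable_mul_of_tsupport_subset hΩ hf.continuous hfc hfΩ
      ((hg.continuousOn_fderiv_of_isOpen hΩ le_rfl).clm_apply continuousOn_const)⟩

lemma setIntegral_fderiv_mul_add_mul_fderiv_eq_zero [FiniteDimensional ℝ E] [μ.IsAddHaarMeasure]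
    (hΩ : IsOpen Ω) (hf : ContDiff ℝ 1 f) (hfc : HasCompactSupport f) (hfΩ : tsupport f ⊆ Ω)
    (hg : ContDiffOn ℝ 1 g Ω) (e : E) :
    ∫ x in Ω, (fderiv ℝ f x e * g x + f x * fderiv ℝ g x e) ∂μ = 0 := by
  obtain ⟨hf'g, hfg'⟩ := integrable_fderiv_mul_and_mul_fderiv (μ := μ) hΩ hf hfc hfΩ hg e
  have hfg : Integrable (fun x => f x * g x) μ :=
    integrable_mul_of_tsupport_subset hΩ hf.continuous hfc hfΩ hg.continuousOn
  have hparts := integral_mul_fderiv_eq_neg_fderiv_mul_of_integrable hf'g hfg' hfg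
    (fun x _ => hf.differentiable one_ne_zero x)
    (fun x hx => (hg.differentiableOn one_ne_zero).differentiableAt (hΩ.mem_nhds (hfΩ hx)))
  rw [setIntegral_eq_integral_of_forall_compl_eq_zero fun x hx => ?_,
    integral_add hf'g hfg', hparts, add_neg_cancel]
  rw [image_eq_zero_of_notMem_tsupport fun h => hx (hfΩ (tsupport_fderiv_apply_subset ℝ e h)),
    image_eq_zero_of_notMem_tsupport fun h => hx (hfΩ h), zero_mul, zero_mul, add_zero]

end IntegrationByParts

/-! ### Admissible pairs -/

section Admissible

variable {d : ℕ} {Ω : Set (Fin d → ℝ)} {ν θ : (Fin d → ℝ) → ℝ}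
  {χ τ : (Fin d → ℝ) → Fin d → Fin d → ℝ} {w v : (Fin d → ℝ) → Fin d → ℝ}

lemma continuousOn_divT (hΩ : IsOpen Ω) (hτ : ∀ i j, ContDiffOn ℝ 1 (fun x => τ x i j) Ω) :
    ContinuousOn (divT τ) Ω :=
  continuousOn_pi.2 fun i => continuousOn_finsetSum _ fun j _ =>
    ((hτ i j).continuousOn_fderiv_of_isOpen hΩ le_rfl).clm_apply continuousOn_const

lemma continuous_jac (hv : ContDiff ℝ 1 v) : Continuous (jac v) :=
  continuous_pi fun i => continuous_pi fun _ =>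
    ((contDiff_pi.1 hv i).continuous_fderiv one_ne_zero).clm_apply continuous_const

lemma jac_sub (hw : ContDiff ℝ 1 w) (hv : ContDiff ℝ 1 v) : jac (w - v) = jac w - jac v := by
  ext x i j
  have hwi := (contDiff_pi.1 hw i).differentiable one_ne_zero x
  have hvi := (contDiff_pi.1 hv i).differentiable one_ne_zero x
  simp only [jac, pd, Pi.sub_apply, fderiv_fun_sub hwi hvi, sub_apply]

lemma divT_sub (hΩ : IsOpen Ω) (hχ : ∀ i j, ContDiffOn ℝ 1 (fun x => χ x i j) Ω)
    (hτ : ∀ i j, ContDiffOn ℝ 1 (fun x => τ x i j) Ω) {x : Fin d → ℝ} (hx : x ∈ Ω) :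
    divT (χ - τ) x = divT χ x - divT τ x := by
  ext i
  have hχij (j) := ((hχ i j).differentiableOn one_ne_zero).differentiableAt (hΩ.mem_nhds hx)
  have hτij (j) := ((hτ i j).differentiableOn one_ne_zero).differentiableAt (hΩ.mem_nhds hx)
  simp only [divT, pd, Pi.sub_apply, fderiv_fun_sub (hχij _) (hτij _),
    sub_apply, Finset.sum_sub_distrib]

lemma epsV_eq_symPart (v : (Fin d → ℝ) → Fin d → ℝ) (x : Fin d → ℝ) :
    epsV v x = symPart d (jac v x) := rfl

namespace Admissible

lemma memWeightedL2_stress (hΩ : IsOpen Ω) (h : Admissible Ω ν θ τ v) :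
    MemWeightedL2 (froForm d) ν⁻¹ τ (volume.restrict Ω) := by
  obtain ⟨hτ, -, -, -, hint, -⟩ := h
  exact ⟨(continuousOn_pi.2 fun i => continuousOn_pi.2 fun j =>
    (hτ i j).continuousOn).aestronglyMeasurable hΩ.measurableSet, hint⟩

lemma memWeightedL2_jac (h : Admissible Ω ν θ τ v) :
    MemWeightedL2 (froForm d) ν (jac v) (volume.restrict Ω) := by
  obtain ⟨-, hv, -, -, -, hint, -⟩ := h
  exact ⟨(continuous_jac hv).aestronglyMeasurable, hint⟩

lemma memWeightedL2_velocity (h : Admissible Ω ν θ τ v) :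
    MemWeightedL2 (dotForm d) (ν / θ) v (volume.restrict Ω) := by
  obtain ⟨-, hv, -, -, -, -, hint, -⟩ := h
  simp only [sq] at hint
  exact ⟨hv.continuous.aestronglyMeasurable, hint⟩

lemma memWeightedL2_divT (hΩ : IsOpen Ω) (h : Admissible Ω ν θ τ v) :
    MemWeightedL2 (dotForm d) (θ / ν) (divT τ) (volume.restrict Ω) := by
  obtain ⟨hτ, -, -, -, -, -, -, hint⟩ := h
  simp only [sq] at hint
  exact ⟨(continuousOn_divT hΩ hτ).aestronglyMeasurable hΩ.measurableSet, hint⟩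

lemma memWeightedL2_epsV (hν : IsWeight ν (volume.restrict Ω)) (h : Admissible Ω ν θ τ v) :
    MemWeightedL2 (froForm d) ν (epsV v) (volume.restrict Ω) :=
  h.memWeightedL2_jac.projection froForm_isPosSemidef isOrthogonalProjection_symPart hν

lemma memWeightedL2_devM (hΩ : IsOpen Ω) (hν : IsWeight ν (volume.restrict Ω))
    (h : Admissible Ω ν θ τ v) :
    MemWeightedL2 (froForm d) ν⁻¹ (fun x => devM (τ x)) (volume.restrict Ω) :=
  (h.memWeightedL2_stress hΩ).projection froForm_isPosSemidef isOrthogonalProjection_deviator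
    hν.inv

lemma sub (hΩ : IsOpen Ω) (hν : IsWeight ν (volume.restrict Ω))
    (hθ : IsWeight θ (volume.restrict Ω)) (h : Admissible Ω ν θ χ w)
    (h' : Admissible Ω ν θ τ v) : Admissible Ω ν θ (χ - τ) (w - v) := by
  have hstress := (h.memWeightedL2_stress hΩ).sub froForm_isPosSemidef
    (h'.memWeightedL2_stress hΩ) hν.inv
  have hjac := h.memWeightedL2_jac.sub froForm_isPosSemidef h'.memWeightedL2_jac hν
  have hvelocity := h.memWeightedL2_velocity.sub dotForm_isPosSemidef h'.memWeightedL2_velocity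
    (hν.div hθ)
  have hdivT := (h.memWeightedL2_divT hΩ).sub dotForm_isPosSemidef (h'.memWeightedL2_divT hΩ)
    (hθ.div hν)
  obtain ⟨hχ, hw, hwc, hwΩ, -⟩ := h
  obtain ⟨hτ, hv, hvc, hvΩ, -⟩ := h'
  have hdivT_sub : divT χ - divT τ =ᵐ[volume.restrict Ω] divT (χ - τ) :=
    (ae_restrict_mem hΩ.measurableSet).mono fun x hx => (divT_sub hΩ hχ hτ hx).symm
  rw [← jac_sub hw hv] at hjac
  refine ⟨fun i j => (hχ i j).sub (hτ i j), hw.sub hv, hwc.sub hvc,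
    (tsupport_sub w v).trans (Set.union_subset hwΩ hvΩ), hstress.integrable, hjac.integrable,
    ?_, ?_⟩
  · simp only [sq]
    exact hvelocity.integrable
  · simp only [sq]
    exact (hdivT.congr hdivT_sub).integrable

end Admissible

end Admissible

/-! ### Integral densities -/

section Densities

variable {d : ℕ} {Ω : Set (Fin d → ℝ)} {ν θ : (Fin d → ℝ) → ℝ}
  {χ τ τ' : (Fin d → ℝ) → Fin d → Fin d → ℝ} {w v v' : (Fin d → ℝ) → Fin d → ℝ}

/-- The integrand of the bilinear form `B_θ((χ, w), (τ, v))`. -/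
def formDensity (ν θ : (Fin d → ℝ) → ℝ) (χ : (Fin d → ℝ) → Fin d → Fin d → ℝ)
    (w : (Fin d → ℝ) → Fin d → ℝ) (τ : (Fin d → ℝ) → Fin d → Fin d → ℝ)
    (v : (Fin d → ℝ) → Fin d → ℝ) (x : Fin d → ℝ) : ℝ :=
  (ν x)⁻¹ * fro (devM (χ x)) (τ x) - 2 * fro (epsV w x) (τ x) + 2 * fro (epsV v x) (χ x) -
    fro (devM (χ x)) (epsV v x) + fro (devM (τ x)) (epsV w x) +
    ν x * fro (epsV w x) (epsV v x) + (θ x / ν x) * ∑ i, divT χ x i * divT τ x i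

/-- The integrand of the squared full norm. -/
def fullDensity (ν θ : (Fin d → ℝ) → ℝ) (τ : (Fin d → ℝ) → Fin d → Fin d → ℝ)
    (v : (Fin d → ℝ) → Fin d → ℝ) (x : Fin d → ℝ) : ℝ :=
  ν x * fro (jac v x) (jac v x) + (ν x / θ x) * ∑ i, (v x i) ^ 2 +
    (ν x)⁻¹ * fro (τ x) (τ x) + (θ x / ν x) * ∑ i, (divT τ x i) ^ 2

/-- The divergence `∇·(τᵀ v)`, expanded by the product rule as `⟨∇v, τ⟩ + v · (∇·τ)`. -/
def divDensity (τ : (Fin d → ℝ) → Fin d → Fin d → ℝ) (v : (Fin d → ℝ) → Fin d → ℝ)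
    (x : Fin d → ℝ) : ℝ :=
  fro (jac v x) (τ x) + ∑ i, v x i * divT τ x i

lemma dotForm_self (p : Fin d → ℝ) : dotForm d p p = ∑ i, p i ^ 2 :=
  show ∑ i, p i * p i = _ from Finset.sum_congr rfl fun i _ => (sq (p i)).symm

lemma fro_devM_self (M : Fin d → Fin d → ℝ) : fro (devM M) M = fro (devM M) (devM M) :=
  (isOrthogonalProjection_deviator.apply_apply M M).symm

lemma formDensity_self (x : Fin d → ℝ) :
    formDensity ν θ τ v τ v x = ν x * fro (epsV v x) (epsV v x) +
      (ν x)⁻¹ * fro (devM (τ x)) (devM (τ x)) + (θ x / ν x) * ∑ i, (divT τ x i) ^ 2 := by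
  simp only [formDensity, fro_devM_self, sq]
  ring

lemma two_mul_formDensity_sub_le {x : Fin d → ℝ} (hν : 0 < ν x) (hθ : 0 < θ x) :
    2 * formDensity ν θ χ w τ v x - 4 * divDensity χ v x ≤
      formDensity ν θ χ w χ w x + 4 * fullDensity ν θ τ v x - 4 * divDensity τ v x := by
  have hmatrix := two_mul_weighted_projections_sub_le froForm_isPosSemidef
    isOrthogonalProjection_deviator isOrthogonalProjection_symPart symPart_sub_deviator hν
    (χ x) (jac w x) (τ x) (jac v x)
  have hvector := two_mul_mul_apply_sub_le dotForm_isPosSemidef (div_pos hθ hν)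
    (divT χ x) (v x) (divT τ x)
  simp only [inv_div, dotForm_self] at hvector
  change 2 * ((ν x)⁻¹ * fro (devM (χ x)) (τ x) - 2 * fro (epsV w x) (τ x) +
    2 * fro (epsV v x) (χ x) - fro (devM (χ x)) (epsV v x) + fro (devM (τ x)) (epsV w x) +
    ν x * fro (epsV w x) (epsV v x)) - 4 * fro (jac v x) (χ x) ≤ ν x * fro (epsV w x) (epsV w x) +
    (ν x)⁻¹ * fro (devM (χ x)) (devM (χ x)) + 4 * (ν x * fro (jac v x) (jac v x) +
    (ν x)⁻¹ * fro (τ x) (τ x) - fro (jac v x) (τ x)) at hmatrix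
  simp only [dotProductBilin_apply_apply, dotProduct] at hvector
  rw [formDensity_self]
  simp only [formDensity, fullDensity, divDensity]
  linarith

lemma formDensity_sub_right {x : Fin d → ℝ} (hjac : jac (v - v') x = jac v x - jac v' x)
    (hdivT : divT (τ - τ') x = divT τ x - divT τ' x) :
    formDensity ν θ χ w (τ - τ') (v - v') x =
      formDensity ν θ χ w τ v x - formDensity ν θ χ w τ' v' x := by
  have heps : epsV (v - v') x = epsV v x - epsV v' x := by
    simp only [epsV_eq_symPart, hjac, map_sub]
  have hdev : devM (τ x - τ' x) = devM (τ x) - devM (τ' x) := map_sub (deviator d) _ _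
  simp only [formDensity, heps, hdev, hdivT, Pi.sub_apply, ← froForm_apply, map_sub,
    LinearMap.sub_apply, mul_sub, Finset.sum_sub_distrib]
  ring

namespace Admissible

lemma integrableOn_formDensity_and_Bform_eq (hΩ : IsOpen Ω) (hν : IsWeight ν (volume.restrict Ω))
    (hθ : IsWeight θ (volume.restrict Ω)) (h : Admissible Ω ν θ χ w)
    (h' : Admissible Ω ν θ τ v) :
    IntegrableOn (formDensity ν θ χ w τ v) Ω ∧
      Bform Ω ν θ χ w τ v = ∫ x in Ω, formDensity ν θ χ w τ v x := by
  have hpsd := froForm_isPosSemidef (d := d)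
  have hχτ : IntegrableOn (fun x => (ν x)⁻¹ * fro (devM (χ x)) (τ x)) Ω :=
    (h.memWeightedL2_devM hΩ hν).integrable_weight_mul_apply hpsd (h'.memWeightedL2_stress hΩ)
      hν.inv
  have hwτ : IntegrableOn (fun x => fro (epsV w x) (τ x)) Ω :=
    (h.memWeightedL2_epsV hν).integrable_apply_of_inv hpsd (h'.memWeightedL2_stress hΩ) hν
  have hvχ : IntegrableOn (fun x => fro (epsV v x) (χ x)) Ω :=
    (h'.memWeightedL2_epsV hν).integrable_apply_of_inv hpsd (h.memWeightedL2_stress hΩ) hν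
  have hχv : IntegrableOn (fun x => fro (devM (χ x)) (epsV v x)) Ω :=
    (h.memWeightedL2_devM hΩ hν).integrable_apply_of_inv hpsd
      (by simpa only [inv_inv] using h'.memWeightedL2_epsV hν) hν.inv
  have hτw : IntegrableOn (fun x => fro (devM (τ x)) (epsV w x)) Ω :=
    (h'.memWeightedL2_devM hΩ hν).integrable_apply_of_inv hpsd
      (by simpa only [inv_inv] using h.memWeightedL2_epsV hν) hν.inv
  have hwv : IntegrableOn (fun x => ν x * fro (epsV w x) (epsV v x)) Ω :=
    (h.memWeightedL2_epsV hν).integrable_weight_mul_apply hpsd (h'.memWeightedL2_epsV hν) hν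
  have hdiv : IntegrableOn (fun x => (θ x / ν x) * ∑ i, divT χ x i * divT τ x i) Ω :=
    (h.memWeightedL2_divT hΩ).integrable_weight_mul_apply dotForm_isPosSemidef
      (h'.memWeightedL2_divT hΩ) (hθ.div hν)
  have h₂ := hχτ.sub (hwτ.const_mul 2)
  have h₃ := h₂.add (hvχ.const_mul 2)
  have h₄ := h₃.sub hχv
  have h₅ := h₄.add hτw
  have h₆ := h₅.add hwv
  refine ⟨h₆.add hdiv, ?_⟩
  simp only [Bform, ← integral_const_mul]
  rw [← integral_sub' hχτ (hwτ.const_mul 2), ← integral_add' h₂ (hvχ.const_mul 2),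
    ← integral_sub' h₃ hχv, ← integral_add' h₄ hτw, ← integral_add' h₅ hwv, ← integral_add' h₆ hdiv]
  rfl

lemma integrableOn_fullDensity_and_normFull_sq
    (hν : IsWeight ν (volume.restrict Ω)) (hθ : IsWeight θ (volume.restrict Ω))
    (h : Admissible Ω ν θ τ v) :
    IntegrableOn (fullDensity ν θ τ v) Ω ∧
      normFull Ω ν θ τ v ^ 2 = ∫ x in Ω, fullDensity ν θ τ v x := by
  obtain ⟨-, -, -, -, hstress, hjac, hvelocity, hdivT⟩ := h
  have hnonneg : 0 ≤ ∫ x in Ω, fullDensity ν θ τ v x := by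
    refine integral_nonneg_of_ae ?_
    filter_upwards [hν.pos, hθ.pos] with x hνx hθx
    have hjac_nonneg : 0 ≤ fro (jac v x) (jac v x) := froForm_isPosSemidef.nonneg _
    have hstress_nonneg : 0 ≤ fro (τ x) (τ x) := froForm_isPosSemidef.nonneg _
    simp only [fullDensity, Pi.zero_apply]
    positivity
  have h₂ := hjac.add hvelocity
  have h₃ := h₂.add hstress
  refine ⟨h₃.add hdivT, ?_⟩
  rw [normFull, ← integral_add' hjac hvelocity, ← integral_add' h₂ hstress,
    ← integral_add' h₃ hdivT]
  exact Real.sq_sqrt hnonneg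

lemma integrableOn_divDensity (hΩ : IsOpen Ω) (hν : IsWeight ν (volume.restrict Ω))
    (hθ : IsWeight θ (volume.restrict Ω)) (h : Admissible Ω ν θ χ w)
    (h' : Admissible Ω ν θ τ v) : IntegrableOn (divDensity χ v) Ω := by
  have hjac : IntegrableOn (fun x => fro (jac v x) (χ x)) Ω :=
    h'.memWeightedL2_jac.integrable_apply_of_inv froForm_isPosSemidef
      (h.memWeightedL2_stress hΩ) hν
  have hvelocity : IntegrableOn (fun x => ∑ i, v x i * divT χ x i) Ω :=
    h'.memWeightedL2_velocity.integrable_apply_of_inv dotForm_isPosSemidef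
      (by simpa only [inv_div] using h.memWeightedL2_divT hΩ) (hν.div hθ)
  exact hjac.add hvelocity

end Admissible

lemma setIntegral_divDensity_eq_zero (hΩ : IsOpen Ω)
    (hτ : ∀ i j, ContDiffOn ℝ 1 (fun x => τ x i j) Ω) (hv : ContDiff ℝ 1 v)
    (hvc : HasCompactSupport v) (hvΩ : tsupport v ⊆ Ω) : ∫ x in Ω, divDensity τ v x = 0 := by
  have hvi_tsupport (i) : tsupport (fun x => v x i) ⊆ tsupport v :=
    tsupport_comp_subset (g := fun y : Fin d → ℝ => y i) rfl v
  have hvi (i) : ContDiff ℝ 1 (fun x => v x i) := contDiff_pi.1 hv i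
  have hvic (i) : HasCompactSupport (fun x => v x i) :=
    hvc.of_isClosed_subset (isClosed_tsupport _) (hvi_tsupport i)
  have hviΩ (i) : tsupport (fun x => v x i) ⊆ Ω := (hvi_tsupport i).trans hvΩ
  have hintegrable (i j) : IntegrableOn (fun x => jac v x i j * τ x i j +
      v x i * pd (fun y => τ y i j) x j) Ω :=
    have hprod := integrable_fderiv_mul_and_mul_fderiv (μ := volume) hΩ (hvi i) (hvic i) (hviΩ i)
      (hτ i j) (Pi.single j 1)
    (hprod.1.add hprod.2).integrableOn
  have hexpand (x) : divDensity τ v x =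
      ∑ i, ∑ j, (jac v x i j * τ x i j + v x i * pd (fun y => τ y i j) x j) := by
    simp only [divDensity, fro, divT, Finset.sum_add_distrib, Finset.mul_sum]
  simp only [hexpand]
  rw [integral_finsetSum _ fun i _ => integrable_finsetSum _ fun j _ => hintegrable i j]
  refine Finset.sum_eq_zero fun i _ => ?_
  rw [integral_finsetSum _ fun j _ => hintegrable i j]
  exact Finset.sum_eq_zero fun j _ => setIntegral_fderiv_mul_add_mul_fderiv_eq_zero hΩ (hvi i)
    (hvic i) (hviΩ i) (hτ i j) (Pi.single j 1)

end Densities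

/-! ### The Céa estimate -/

section Cea

variable {d : ℕ} {Ω : Set (Fin d → ℝ)} {ν θ : (Fin d → ℝ) → ℝ}
  {χ τ τ' : (Fin d → ℝ) → Fin d → Fin d → ℝ} {w v v' : (Fin d → ℝ) → Fin d → ℝ}

lemma Bform_self_s11 (hν : ∀ᵐ x ∂volume.restrict Ω, 0 < ν x)
    (hθ : ∀ᵐ x ∂volume.restrict Ω, 0 < θ x) : Bform Ω ν θ τ v τ v = normEg Ω ν θ τ v ^ 2 := by
  have heps : 0 ≤ ∫ x in Ω, ν x * fro (epsV v x) (epsV v x) :=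
    integral_nonneg_of_ae (hν.mono fun x hx =>
      mul_nonneg hx.le (froForm_isPosSemidef.nonneg (epsV v x)))
  have hdev : 0 ≤ ∫ x in Ω, (ν x)⁻¹ * fro (devM (τ x)) (devM (τ x)) :=
    integral_nonneg_of_ae (hν.mono fun x hx =>
      mul_nonneg (inv_pos.2 hx).le (froForm_isPosSemidef.nonneg (devM (τ x))))
  have hdiv : 0 ≤ ∫ x in Ω, (θ x / ν x) * ∑ i, (divT τ x i) ^ 2 := by
    refine integral_nonneg_of_ae ?_
    filter_upwards [hν, hθ] with x hνx hθx
    exact mul_nonneg (div_pos hθx hνx).le (Finset.sum_nonneg fun _ _ => sq_nonneg _)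
  rw [normEg, Real.sq_sqrt (by positivity)]
  simp only [Bform, fro_devM_self, sq]
  ring

lemma Bform_sub_right (hΩ : IsOpen Ω) (hν : IsWeight ν (volume.restrict Ω))
    (hθ : IsWeight θ (volume.restrict Ω)) (h : Admissible Ω ν θ χ w)
    (h₁ : Admissible Ω ν θ τ v) (h₂ : Admissible Ω ν θ τ' v') :
    Bform Ω ν θ χ w (τ - τ') (v - v') = Bform Ω ν θ χ w τ v - Bform Ω ν θ χ w τ' v' := by
  obtain ⟨hint₁, heq₁⟩ := h.integrableOn_formDensity_and_Bform_eq hΩ hν hθ h₁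
  obtain ⟨hint₂, heq₂⟩ := h.integrableOn_formDensity_and_Bform_eq hΩ hν hθ h₂
  rw [(h.integrableOn_formDensity_and_Bform_eq hΩ hν hθ (h₁.sub hΩ hν hθ h₂)).2, heq₁, heq₂,
    ← integral_sub hint₁ hint₂]
  obtain ⟨hτ, hv, -⟩ := h₁
  obtain ⟨hτ', hv', -⟩ := h₂
  exact setIntegral_congr_fun hΩ.measurableSet fun x hx =>
    formDensity_sub_right (congrFun (jac_sub hv hv') x) (divT_sub hΩ hτ hτ' hx)

lemma two_mul_Bform_le (hΩ : IsOpen Ω) (hν : IsWeight ν (volume.restrict Ω))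
    (hθ : IsWeight θ (volume.restrict Ω)) (h : Admissible Ω ν θ χ w)
    (h' : Admissible Ω ν θ τ v) :
    2 * Bform Ω ν θ χ w τ v ≤ normEg Ω ν θ χ w ^ 2 + 4 * normFull Ω ν θ τ v ^ 2 := by
  obtain ⟨hform, hBform⟩ := h.integrableOn_formDensity_and_Bform_eq hΩ hν hθ h'
  obtain ⟨hself, hBself⟩ := h.integrableOn_formDensity_and_Bform_eq hΩ hν hθ h
  obtain ⟨hfull, hnormFull⟩ := h'.integrableOn_fullDensity_and_normFull_sq hν hθ
  have hdivχ := h.integrableOn_divDensity hΩ hν hθ h'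
  have hdivτ := h'.integrableOn_divDensity hΩ hν hθ h'
  have hsum : IntegrableOn
      (fun x => formDensity ν θ χ w χ w x + 4 * fullDensity ν θ τ v x) Ω :=
    hself.add (hfull.const_mul 4)
  have hle : ∫ x in Ω, (2 * formDensity ν θ χ w τ v x - 4 * divDensity χ v x) ≤
      ∫ x in Ω, (formDensity ν θ χ w χ w x + 4 * fullDensity ν θ τ v x - 4 * divDensity τ v x) := by
    refine integral_mono_ae ((hform.const_mul 2).sub (hdivχ.const_mul 4))
      (hsum.sub (hdivτ.const_mul 4)) ?_
    filter_upwards [hν.pos, hθ.pos] with x hνx hθx using two_mul_formDensity_sub_le hνx hθx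
  obtain ⟨hχ, -⟩ := h
  obtain ⟨hτ, hv, hvc, hvΩ, -⟩ := h'
  rw [integral_sub (hform.const_mul 2) (hdivχ.const_mul 4),
    integral_sub hsum (hdivτ.const_mul 4), integral_add hself (hfull.const_mul 4)] at hle
  simpa only [integral_const_mul, setIntegral_divDensity_eq_zero hΩ hχ hv hvc hvΩ,
    setIntegral_divDensity_eq_zero hΩ hτ hv hvc hvΩ, mul_zero, sub_zero, ← hBform, ← hBself,
    ← hnormFull, Bform_self_s11 hν.pos hθ.pos] using hle

lemma normEg_le_two_mul_normFull (hΩ : IsOpen Ω) (hν : IsWeight ν (volume.restrict Ω))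
    (hθ : IsWeight θ (volume.restrict Ω)) (h : Admissible Ω ν θ χ w)
    (h' : Admissible Ω ν θ τ v) (horth : Bform Ω ν θ χ w τ v = 0) :
    normEg Ω ν θ χ w ≤ 2 * normFull Ω ν θ (χ - τ) (w - v) := by
  have hbound := two_mul_Bform_le hΩ hν hθ h (h.sub hΩ hν hθ h')
  rw [Bform_sub_right hΩ hν hθ h h h', horth, sub_zero, Bform_self_s11 hν.pos hθ.pos] at hbound
  have hnormFull : 0 ≤ normFull Ω ν θ (χ - τ) (w - v) := Real.sqrt_nonneg _
  refine le_of_sq_le_sq ?_ (by positivity)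
  linarith [mul_pow 2 (normFull Ω ν θ (χ - τ) (w - v)) 2]

theorem stmt_11_general (hΩ : IsOpen Ω) (hν : IsWeight ν (volume.restrict Ω))
    (hθ : IsWeight θ (volume.restrict Ω))
    (S : AddSubgroup (((Fin d → ℝ) → Fin d → Fin d → ℝ) × ((Fin d → ℝ) → Fin d → ℝ)))
    (hS : ∀ p ∈ S, Admissible Ω ν θ p.1 p.2) {σ : (Fin d → ℝ) → Fin d → Fin d → ℝ}
    {u : (Fin d → ℝ) → Fin d → ℝ} (hσu : Admissible Ω ν θ σ u)
    {sh : ((Fin d → ℝ) → Fin d → Fin d → ℝ) × ((Fin d → ℝ) → Fin d → ℝ)} (hsh : sh ∈ S)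
    (hGalerkin : ∀ p ∈ S, Bform Ω ν θ (σ - sh.1) (u - sh.2) p.1 p.2 = 0) :
    (∀ p ∈ S, normEg Ω ν θ (σ - sh.1) (u - sh.2) ≤ 2 * normFull Ω ν θ (σ - p.1) (u - p.2)) ∧
      normEg Ω ν θ (σ - sh.1) (u - sh.2) ≤
        2 * ⨅ p : S, normFull Ω ν θ (σ - p.1.1) (u - p.1.2) := by
  have hcea : ∀ p ∈ S, normEg Ω ν θ (σ - sh.1) (u - sh.2) ≤
      2 * normFull Ω ν θ (σ - p.1) (u - p.2) := fun p hp => by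
    have htest : p - sh ∈ S := S.sub_mem hp hsh
    have hle := normEg_le_two_mul_normFull hΩ hν hθ (hσu.sub hΩ hν hθ (hS sh hsh))
      (hS _ htest) (hGalerkin _ htest)
    simpa only [Prod.fst_sub, Prod.snd_sub, sub_sub_sub_cancel_right] using hle
  refine ⟨hcea, ?_⟩
  rw [Real.mul_iInf_of_nonneg zero_le_two]
  exact le_ciInf fun p => hcea p p.2

end Cea

/-- Robust Céa-type estimate, Theorem 6.1: under Galerkin
orthogonality on an ℝ-linear subspace `S` of admissible pairs,
`|||(σ−σ_h, u−u_h)|||_{eg,θ} ≤ 2 |||(σ−τ_h, u−v_h)|||_{full,θ}` for every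
`(τ_h,v_h) ∈ S`, and hence the error is bounded by twice the infimum. -/
theorem stmt_11 (d : ℕ) (Ω : Set (Fin d → ℝ)) (hΩ : IsOpen Ω)
    (ν θ : (Fin d → ℝ) → ℝ) (hνmeas : Measurable ν) (hθmeas : Measurable θ)
    (lam Lam θ₀ θ₁ : ℝ) (hlam : 0 < lam) (hνbd : ∀ x ∈ Ω, lam ≤ ν x ∧ ν x ≤ Lam)
    (hθ₀ : 0 < θ₀) (hθbd : ∀ x ∈ Ω, θ₀ ≤ θ x ∧ θ x ≤ θ₁)
    (S : Submodule ℝ (((Fin d → ℝ) → Fin d → Fin d → ℝ) × ((Fin d → ℝ) → Fin d → ℝ)))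
    (hS : ∀ p ∈ S, Admissible Ω ν θ p.1 p.2)
    (σ : (Fin d → ℝ) → Fin d → Fin d → ℝ) (u : (Fin d → ℝ) → Fin d → ℝ)
    (hσu : Admissible Ω ν θ σ u)
    (sh : ((Fin d → ℝ) → Fin d → Fin d → ℝ) × ((Fin d → ℝ) → Fin d → ℝ))
    (hsh : sh ∈ S)
    (hGalerkin : ∀ p ∈ S, Bform Ω ν θ (σ - sh.1) (u - sh.2) p.1 p.2 = 0) :
    (∀ p ∈ S, normEg Ω ν θ (σ - sh.1) (u - sh.2) ≤
        2 * normFull Ω ν θ (σ - p.1) (u - p.2)) ∧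
      normEg Ω ν θ (σ - sh.1) (u - sh.2) ≤
        2 * ⨅ p : S, normFull Ω ν θ (σ - (p : ((Fin d → ℝ) → Fin d → Fin d → ℝ) × ((Fin d → ℝ) → Fin d → ℝ)).1) (u - (p : ((Fin d → ℝ) → Fin d → Fin d → ℝ) × ((Fin d → ℝ) → Fin d → ℝ)).2) := by
  have hpos {w : (Fin d → ℝ) → ℝ} {a b : ℝ} (hw : Measurable w) (ha : 0 < a)
      (hbd : ∀ x ∈ Ω, a ≤ w x ∧ w x ≤ b) : IsWeight w (volume.restrict Ω) :=
    ⟨hw.aemeasurable, (ae_restrict_mem hΩ.measurableSet).mono fun x hx => ha.trans_le (hbd x hx).1⟩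
  exact stmt_11_general hΩ (hpos hνmeas hlam hνbd) (hpos hθmeas hθ₀ hθbd) S.toAddSubgroup hS hσu
    hsh hGalerkin
end
end

section
/- (Consistency of the augmented mixed formulation.) Let σ : Ω → M_d(ℝ) be C¹ with ∫_Ω ν^{-1}|σ|_F² < ∞ and ∫_Ω (θ/ν)|∇·σ|² < ∞, let u : Ω → ℝ^d be C¹ with ∫_Ω ν|∇u|_F² < ∞, and let f : Ω → ℝ^d be continuous, satisfying ∇·σ = −f and Aσ = ν·ε(u) pointwise on Ω. Then σ(x) is a symmetric matrix for every x ∈ Ω, tr(ε(u)) = 0 on Ω, and for every admissible pair (τ,v): B_θ((σ,u),(τ,v)) = 2∫_Ω f·v dx − ∫_Ω (θ/ν) f·(∇·τ) dx. -/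
open MeasureTheory

noncomputable section

/-!
Symmetry of `σ` and incompressibility of `u` are read off the constitutive law `Aσ = ν ε(u)`: its
right-hand side is symmetric while `A` leaves off-diagonal entries unchanged, and its left-hand side
is trace-free while `ν ≠ 0`.

In `B_θ((σ,u),(τ,v))` the integrands `ν⁻¹⟨Aσ,τ⟩`, `⟨ε(u),τ⟩` and `⟨Aτ,ε(u)⟩` coincide, the last one
because `ε(u)` is trace-free, so that they enter with total weight `1 - 2 + 1 = 0`; likewise
`⟨Aσ,ε(v)⟩ = ν⟨ε(u),ε(v)⟩` cancels. Only `2∫⟨ε(v),σ⟩ + ∫(θ/ν)(∇·σ)·(∇·τ)` is left. As `σ` is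
symmetric, `⟨ε(v),σ⟩ = ⟨∇v,σ⟩`, and integration by parts turns the first term into `-2∫ v·(∇·σ)`;
now insert `∇·σ = -f`.
-/

section Matrices

variable {d : ℕ}

lemma fro_comm (S T : Fin d → Fin d → ℝ) : fro S T = fro T S := by
  simp only [fro, mul_comm]

lemma fro_smul_left (c : ℝ) (S T : Fin d → Fin d → ℝ) : fro (c • S) T = c * fro S T := by
  simp only [fro, Pi.smul_apply, smul_eq_mul, Finset.mul_sum, mul_assoc]

lemma fro_transpose_left_of_symm (S : Fin d → Fin d → ℝ) {T : Fin d → Fin d → ℝ}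
    (hT : ∀ i j, T i j = T j i) : fro (fun i j => S j i) T = fro S T := by
  rw [fro, Finset.sum_comm]
  simp only [fro, hT]

lemma devM_apply_of_ne (M : Fin d → Fin d → ℝ) {i j : Fin d} (hij : i ≠ j) :
    devM M i j = M i j := by
  simp [devM, hij]

lemma fro_devM_left_of_trace_eq_zero (M : Fin d → Fin d → ℝ) {E : Fin d → Fin d → ℝ}
    (hE : ∑ i, E i i = 0) : fro (devM M) E = fro M E := by
  have hdiag : ∑ i, ∑ j, (∑ k, M k k) / d * (if i = j then 1 else 0) * E i j = 0 := by
    simp [← Finset.mul_sum, hE]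
  simp only [fro, devM, sub_mul, Finset.sum_sub_distrib, hdiag, sub_zero]

lemma epsV_symm (v : (Fin d → ℝ) → Fin d → ℝ) (x : Fin d → ℝ) (i j : Fin d) :
    epsV v x i j = epsV v x j i := by
  rw [epsV, epsV, add_comm]

lemma fro_epsV_of_symm (v : (Fin d → ℝ) → Fin d → ℝ) (x : Fin d → ℝ) {S : Fin d → Fin d → ℝ}
    (hS : ∀ i j, S i j = S j i) : fro (epsV v x) S = fro (jac v x) S := by
  have hsplit : fro (epsV v x) S = (fro (jac v x) S + fro (fun i j => jac v x j i) S) / 2 := by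
    simp only [fro, epsV, ← Finset.sum_add_distrib, Finset.sum_div, div_mul_eq_mul_div, add_mul]
  rw [hsplit, fro_transpose_left_of_symm _ hS, add_self_div_two]

end Matrices

section IntegrationByParts

lemma integrable_mul_of_hasCompactSupport {X : Type*} [TopologicalSpace X] [MeasurableSpace X]
    [OpensMeasurableSpace X] {μ : Measure X} [IsFiniteMeasureOnCompacts μ] {Ω : Set X}
    {a b : X → ℝ} (ha : Continuous a) (hac : HasCompactSupport a) (haΩ : tsupport a ⊆ Ω)
    (hb : ContinuousOn b Ω) : Integrable (fun x => a x * b x) μ := by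
  have hsupp : Function.support (fun x => a x * b x) ⊆ tsupport a :=
    (Function.support_mul_subset_left a b).trans (subset_tsupport a)
  rw [← integrableOn_iff_integrable_of_support_subset hsupp]
  exact (ha.continuousOn.mul (hb.mono haΩ)).integrableOn_compact' hac
    (isClosed_tsupport a).measurableSet

section Scalar

variable {E : Type*} [NormedAddCommGroup E] [NormedSpace ℝ E] [MeasurableSpace E] [BorelSpace E]
  {μ : Measure E} {Ω : Set E} {a b : E → ℝ}

lemma integrable_mul_fderiv_of_tsupport_subset [IsFiniteMeasureOnCompacts μ] (hΩ : IsOpen Ω)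
    (ha : Continuous a) (hac : HasCompactSupport a) (haΩ : tsupport a ⊆ Ω)
    (hb : ContDiffOn ℝ 1 b Ω) (w : E) : Integrable (fun x => a x * fderiv ℝ b x w) μ :=
  integrable_mul_of_hasCompactSupport ha hac haΩ
    ((hb.continuousOn_fderiv_of_isOpen hΩ le_rfl).clm_apply continuousOn_const)

lemma integrable_fderiv_mul_of_tsupport_subset [IsFiniteMeasureOnCompacts μ]
    (ha : ContDiff ℝ 1 a) (hac : HasCompactSupport a) (haΩ : tsupport a ⊆ Ω)
    (hb : ContinuousOn b Ω) (w : E) : Integrable (fun x => fderiv ℝ a x w * b x) μ :=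
  integrable_mul_of_hasCompactSupport
    ((ha.continuous_fderiv one_ne_zero).clm_apply continuous_const) (hac.fderiv_apply ℝ w)
    ((tsupport_fderiv_apply_subset ℝ w).trans haΩ) hb

lemma setIntegral_fderiv_mul_eq_neg_mul_fderiv [FiniteDimensional ℝ E] [μ.IsAddHaarMeasure]
    (hΩ : IsOpen Ω) (ha : ContDiff ℝ 1 a) (hac : HasCompactSupport a) (haΩ : tsupport a ⊆ Ω)
    (hb : ContDiffOn ℝ 1 b Ω) (w : E) :
    ∫ x in Ω, fderiv ℝ a x w * b x ∂μ = -∫ x in Ω, a x * fderiv ℝ b x w ∂μ := by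
  have ha_zero : ∀ x ∉ Ω, a x = 0 := fun x hx =>
    image_eq_zero_of_notMem_tsupport fun h => hx (haΩ h)
  have hda_zero : ∀ x ∉ Ω, fderiv ℝ a x = 0 := fun x hx =>
    fderiv_of_notMem_tsupport ℝ fun h => hx (haΩ h)
  rw [setIntegral_eq_integral_of_forall_compl_eq_zero fun x hx => by simp [hda_zero x hx],
    setIntegral_eq_integral_of_forall_compl_eq_zero fun x hx => by simp [ha_zero x hx],
    integral_mul_fderiv_eq_neg_fderiv_mul_of_integrable, neg_neg]
  · exact integrable_fderiv_mul_of_tsupport_subset ha hac haΩ hb.continuousOn w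
  · exact integrable_mul_fderiv_of_tsupport_subset hΩ ha.continuous hac haΩ hb w
  · exact integrable_mul_of_hasCompactSupport ha.continuous hac haΩ hb.continuousOn
  · exact fun x _ => ha.differentiable one_ne_zero x
  · exact fun x hx => (hb.contDiffAt (hΩ.mem_nhds (haΩ hx))).differentiableAt one_ne_zero

end Scalar

variable {d : ℕ} {Ω : Set (Fin d → ℝ)} {S : (Fin d → ℝ) → Fin d → Fin d → ℝ}
  {v : (Fin d → ℝ) → Fin d → ℝ}

lemma setIntegral_fro_jac_eq_neg_divT (hΩ : IsOpen Ω)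
    (hS : ∀ i j, ContDiffOn ℝ 1 (fun x => S x i j) Ω) (hv : ContDiff ℝ 1 v)
    (hvc : HasCompactSupport v) (hvΩ : tsupport v ⊆ Ω) :
    ∫ x in Ω, fro (jac v x) (S x) = -∫ x in Ω, ∑ i, v x i * divT S x i := by
  have hvi (i) : ContDiff ℝ 1 (fun x => v x i) := contDiff_pi.1 hv i
  have hts (i) : tsupport (fun x => v x i) ⊆ tsupport v :=
    tsupport_comp_subset (g := fun y : Fin d → ℝ => y i) rfl v
  have hvic (i) : HasCompactSupport (fun x => v x i) :=
    hvc.of_isClosed_subset (isClosed_tsupport _) (hts i)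
  have hviΩ (i) : tsupport (fun x => v x i) ⊆ Ω := (hts i).trans hvΩ
  have hint_jac (i j) : IntegrableOn (fun x => jac v x i j * S x i j) Ω :=
    (integrable_fderiv_mul_of_tsupport_subset (hvi i) (hvic i) (hviΩ i)
      (hS i j).continuousOn _).integrableOn
  have hint_pd (i j) : IntegrableOn (fun x => v x i * pd (fun y => S y i j) x j) Ω :=
    (integrable_mul_fderiv_of_tsupport_subset hΩ (hvi i).continuous (hvic i) (hviΩ i)
      (hS i j) _).integrableOn
  have hparts (i j) : ∫ x in Ω, jac v x i j * S x i j =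
      -∫ x in Ω, v x i * pd (fun y => S y i j) x j :=
    setIntegral_fderiv_mul_eq_neg_mul_fderiv hΩ (hvi i) (hvic i) (hviΩ i) (hS i j) _
  calc ∫ x in Ω, fro (jac v x) (S x)
      = ∑ i, ∑ j, ∫ x in Ω, jac v x i j * S x i j := by
        simp only [fro]
        rw [integral_finsetSum _ fun i _ => integrable_finsetSum _ fun j _ => hint_jac i j]
        exact Finset.sum_congr rfl fun i _ => integral_finsetSum _ fun j _ => hint_jac i j
    _ = -∑ i, ∑ j, ∫ x in Ω, v x i * pd (fun y => S y i j) x j := by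
        simp only [hparts, Finset.sum_neg_distrib]
    _ = -∫ x in Ω, ∑ i, v x i * divT S x i := by
        simp only [divT, Finset.mul_sum]
        rw [integral_finsetSum _ fun i _ => integrable_finsetSum _ fun j _ => hint_pd i j]
        exact congrArg _ <| Finset.sum_congr rfl fun i _ =>
          (integral_finsetSum _ fun j _ => hint_pd i j).symm

lemma setIntegral_fro_epsV_eq_neg_divT (hΩ : IsOpen Ω)
    (hS : ∀ i j, ContDiffOn ℝ 1 (fun x => S x i j) Ω) (hsymm : ∀ x ∈ Ω, ∀ i j, S x i j = S x j i)
    (hv : ContDiff ℝ 1 v) (hvc : HasCompactSupport v) (hvΩ : tsupport v ⊆ Ω) :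
    ∫ x in Ω, fro (epsV v x) (S x) = -∫ x in Ω, ∑ i, v x i * divT S x i := by
  rw [← setIntegral_fro_jac_eq_neg_divT hΩ hS hv hvc hvΩ]
  exact setIntegral_congr_fun hΩ.measurableSet fun x hx => fro_epsV_of_symm v x (hsymm x hx)

end IntegrationByParts

section ConstitutiveLaw

variable {d : ℕ}

lemma symm_of_devM_eq_smul {M E : Fin d → Fin d → ℝ} {c : ℝ} (h : devM M = c • E)
    (hE : ∀ i j, E i j = E j i) (i j : Fin d) : M i j = M j i := by
  rcases eq_or_ne i j with rfl | hij
  · rfl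
  · rw [← devM_apply_of_ne M hij, ← devM_apply_of_ne M hij.symm, h]
    simp only [Pi.smul_apply, hE i j]

lemma trace_eq_zero_of_devM_eq_smul {M E : Fin d → Fin d → ℝ} {c : ℝ} (hc : c ≠ 0)
    (h : devM M = c • E) : ∑ i, E i i = 0 := by
  have htr : c * ∑ i, E i i = 0 := by
    simpa only [h, Pi.smul_apply, smul_eq_mul, ← Finset.mul_sum] using trace_devM M
  exact (mul_eq_zero.1 htr).resolve_left hc

lemma Bform_of_devM_eq_smul_epsV {Ω : Set (Fin d → ℝ)} (hΩ : MeasurableSet Ω)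
    {ν : (Fin d → ℝ) → ℝ} (hν : ∀ x ∈ Ω, ν x ≠ 0) (θ : (Fin d → ℝ) → ℝ)
    {σ : (Fin d → ℝ) → Fin d → Fin d → ℝ} {u : (Fin d → ℝ) → Fin d → ℝ}
    (hσu : ∀ x ∈ Ω, devM (σ x) = ν x • epsV u x)
    (τ : (Fin d → ℝ) → Fin d → Fin d → ℝ) (v : (Fin d → ℝ) → Fin d → ℝ) :
    Bform Ω ν θ σ u τ v = 2 * (∫ x in Ω, fro (epsV v x) (σ x))
      + ∫ x in Ω, (θ x / ν x) * ∑ i, divT σ x i * divT τ x i := by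
  have hστ : ∫ x in Ω, (ν x)⁻¹ * fro (devM (σ x)) (τ x) = ∫ x in Ω, fro (epsV u x) (τ x) :=
    setIntegral_congr_fun hΩ fun x hx => by
      simp only [hσu x hx, fro_smul_left, inv_mul_cancel_left₀ (hν x hx)]
  have hσv : ∫ x in Ω, fro (devM (σ x)) (epsV v x) = ∫ x in Ω, ν x * fro (epsV u x) (epsV v x) :=
    setIntegral_congr_fun hΩ fun x hx => by
      simp only [hσu x hx, fro_smul_left]
  have hτu : ∫ x in Ω, fro (devM (τ x)) (epsV u x) = ∫ x in Ω, fro (epsV u x) (τ x) :=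
    setIntegral_congr_fun hΩ fun x hx => by
      have htr : ∑ i, epsV u x i i = 0 := trace_eq_zero_of_devM_eq_smul (hν x hx) (hσu x hx)
      simp only [fro_devM_left_of_trace_eq_zero _ htr, fro_comm (τ x)]
  rw [Bform, hστ, hσv, hτu]
  ring

end ConstitutiveLaw

theorem stmt_12_general {d : ℕ} {Ω : Set (Fin d → ℝ)} (hΩ : IsOpen Ω)
    {ν θ : (Fin d → ℝ) → ℝ} (hν : ∀ x ∈ Ω, ν x ≠ 0)
    {σ : (Fin d → ℝ) → Fin d → Fin d → ℝ}
    (hσ : ∀ i j, ContDiffOn ℝ 1 (fun x => σ x i j) Ω)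
    (_hσdiv : IntegrableOn (fun x => (θ x / ν x) * ∑ i, (divT σ x i) ^ 2) Ω)
    {u : (Fin d → ℝ) → Fin d → ℝ} (_hu : ContDiffOn ℝ 1 u Ω)
    (_huint : IntegrableOn (fun x => ν x * fro (jac u x) (jac u x)) Ω)
    {f : (Fin d → ℝ) → Fin d → ℝ} (hmom : ∀ x ∈ Ω, ∀ i, divT σ x i = -f x i)
    (hconst : ∀ x ∈ Ω, ∀ i j, devM (σ x) i j = ν x * epsV u x i j) :
    (∀ x ∈ Ω, ∀ i j, σ x i j = σ x j i) ∧
      (∀ x ∈ Ω, ∑ i, epsV u x i i = 0) ∧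
      (∀ (τ : (Fin d → ℝ) → Fin d → Fin d → ℝ) (v : (Fin d → ℝ) → Fin d → ℝ),
        Admissible Ω ν θ τ v →
          Bform Ω ν θ σ u τ v =
            2 * (∫ x in Ω, ∑ i, f x i * v x i)
              - ∫ x in Ω, (θ x / ν x) * ∑ i, f x i * divT τ x i) := by
  have hσu : ∀ x ∈ Ω, devM (σ x) = ν x • epsV u x := fun x hx => funext₂ (hconst x hx)
  have hsymm : ∀ x ∈ Ω, ∀ i j, σ x i j = σ x j i := fun x hx =>
    symm_of_devM_eq_smul (hσu x hx) (epsV_symm u x)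
  refine ⟨hsymm, fun x hx => trace_eq_zero_of_devM_eq_smul (hν x hx) (hσu x hx), ?_⟩
  rintro τ v ⟨-, hv, hvc, hvΩ, -⟩
  have hload : ∫ x in Ω, fro (epsV v x) (σ x) = ∫ x in Ω, ∑ i, f x i * v x i := by
    rw [setIntegral_fro_epsV_eq_neg_divT hΩ hσ hsymm hv hvc hvΩ, ← integral_neg]
    refine setIntegral_congr_fun hΩ.measurableSet fun x hx => ?_
    simp only [hmom x hx, mul_neg, Finset.sum_neg_distrib, neg_neg, mul_comm]
  have hdiv : ∫ x in Ω, (θ x / ν x) * ∑ i, divT σ x i * divT τ x i =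
      -∫ x in Ω, (θ x / ν x) * ∑ i, f x i * divT τ x i := by
    rw [← integral_neg]
    refine setIntegral_congr_fun hΩ.measurableSet fun x hx => ?_
    simp only [hmom x hx, neg_mul, Finset.sum_neg_distrib, mul_neg]
  rw [Bform_of_devM_eq_smul_epsV hΩ.measurableSet hν θ hσu, hload, hdiv, sub_eq_add_neg]

/-- Consistency of the augmented mixed formulation: if
`∇·σ = −f` and `Aσ = ν ε(u)` pointwise on `Ω`, then `σ` is symmetric on `Ω`,
`tr ε(u) = 0` on `Ω`, and `B_θ((σ,u),(τ,v)) = 2∫_Ω f·v − ∫_Ω (θ/ν) f·(∇·τ)`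
for every admissible pair `(τ,v)`. -/
theorem stmt_12 (d : ℕ) (Ω : Set (Fin d → ℝ)) (hΩ : IsOpen Ω)
    (ν θ : (Fin d → ℝ) → ℝ) (hνmeas : Measurable ν) (hθmeas : Measurable θ)
    (lam Lam θ₀ θ₁ : ℝ) (hlam : 0 < lam) (hνbd : ∀ x ∈ Ω, lam ≤ ν x ∧ ν x ≤ Lam)
    (hθ₀ : 0 < θ₀) (hθbd : ∀ x ∈ Ω, θ₀ ≤ θ x ∧ θ x ≤ θ₁)
    (σ : (Fin d → ℝ) → Fin d → Fin d → ℝ)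
    (hσ : ∀ i j, ContDiffOn ℝ 1 (fun x => σ x i j) Ω)
    (hσint : IntegrableOn (fun x => (ν x)⁻¹ * fro (σ x) (σ x)) Ω)
    (hσdiv : IntegrableOn (fun x => (θ x / ν x) * ∑ i, (divT σ x i) ^ 2) Ω)
    (u : (Fin d → ℝ) → Fin d → ℝ) (hu : ContDiffOn ℝ 1 u Ω)
    (huint : IntegrableOn (fun x => ν x * fro (jac u x) (jac u x)) Ω)
    (f : (Fin d → ℝ) → Fin d → ℝ) (hf : ContinuousOn f Ω)
    (hmom : ∀ x ∈ Ω, ∀ i, divT σ x i = -f x i)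
    (hconst : ∀ x ∈ Ω, ∀ i j, devM (σ x) i j = ν x * epsV u x i j) :
    (∀ x ∈ Ω, ∀ i j, σ x i j = σ x j i) ∧
      (∀ x ∈ Ω, ∑ i, epsV u x i i = 0) ∧
      (∀ (τ : (Fin d → ℝ) → Fin d → Fin d → ℝ) (v : (Fin d → ℝ) → Fin d → ℝ),
        Admissible Ω ν θ τ v →
          Bform Ω ν θ σ u τ v =
            2 * (∫ x in Ω, ∑ i, f x i * v x i)
              - ∫ x in Ω, (θ x / ν x) * ∑ i, f x i * divT τ x i) := by
  have hν : ∀ x ∈ Ω, ν x ≠ 0 := fun x hx => (hlam.trans_le (hνbd x hx).1).ne'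
  exact stmt_12_general hΩ hν hσ hσdiv hu huint hmom hconst
end
end
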